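/- Let Γ be a labeled graph with all labels positive, e an oriented edge, and A = (e₁,…,eₛ) an e-edge path. Suppose σ = (eᵢ,…,eⱼ), for some 1 ≤ i ≤ j ≤ s, is a redundant subcycle of A, i.e. o(eᵢ) = t(eⱼ) and q(eᵢ,…,eⱼ) = 1. Then A∖σ := (e₁,…,eᵢ₋₁,eⱼ₊₁,…,eₛ) is again an e-edge path, and sliding e over A produces the same labeled graph as sliding e over A∖σ. -/

import Mathlib

/-! Labeled graphs in the sense of generalized Baumslag–Solitar theory. -/

structure LGraph (V E : Type) where
  o : E → V
  bar : E → E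
  bar_bar : ∀ e, bar (bar e) = e
  bar_ne : ∀ e, bar e ≠ e
  lab : E → ℤ

namespace LGraph

variable {V E V' E' : Type}

/-- Terminal vertex of an oriented edge. -/
def t (G : LGraph V E) (e : E) : V := G.o (G.bar e)

/-- All labels are positive. -/
def Positive (G : LGraph V E) : Prop := ∀ e : E, 0 < G.lab e

/-- No collapsible edge: every label-1 edge is a loop. -/
def Reduced (G : LGraph V E) : Prop := ∀ e : E, G.lab e = 1 → G.o e = G.t e

/-- An `n`-rose: one vertex and `n` pairs of oriented edges. -/
def IsRose (G : LGraph V E) (n : ℕ) : Prop :=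
  Nat.card V = 1 ∧ Nat.card E = 2 * n

/-- Modulus of a single oriented edge: `λ(ē)/λ(e)`. -/
def qe (G : LGraph V E) (e : E) : ℚ := (G.lab (G.bar e) : ℚ) / (G.lab e : ℚ)

/-- Modulus of an edge path. -/
def q (G : LGraph V E) (l : List E) : ℚ := (l.map G.qe).prod

/-- Consecutive edges match up. -/
def IsEdgePath (G : LGraph V E) (l : List E) : Prop :=
  List.Chain' (fun a b => G.t a = G.o b) l

/-- An `e`-edge path. -/
def IsEEdgePath (G : LGraph V E) (e : E) (l : List E) : Prop :=
  G.IsEdgePath l ∧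
  (∀ a ∈ l, a ≠ e ∧ a ≠ G.bar e) ∧
  (∀ a ∈ l.head?, G.o a = G.o e) ∧
  ∀ i : Fin l.length, ∃ k : ℤ,
    (G.lab e : ℚ) * G.q (l.take i.1) = (k : ℚ) * (G.lab (l.get i) : ℚ)

/-- A monotone cycle `(e₁,…,eₛ,e)`. -/
def IsMonotoneCycle (G : LGraph V E) (l : List E) (e : E) : Prop :=
  G.IsEEdgePath (G.bar e) l ∧
  G.t (l.getLastD e) = G.o e ∧
  ∃ k : ℤ, G.q (l ++ [e]) = (k : ℚ)

/-- A strict monotone cycle. -/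
def IsStrictMonotoneCycle (G : LGraph V E) (l : List E) (e : E) : Prop :=
  G.IsMonotoneCycle l e ∧ G.q (l ++ [e]) ≠ 1

def HasStrictMonotoneCycle (G : LGraph V E) : Prop :=
  ∃ (l : List E) (e : E), G.IsStrictMonotoneCycle l e

/-- A strict `e`-integer cycle. -/
def IsStrictIntegerCycle (G : LGraph V E) (e : E) (l : List E) : Prop :=
  G.IsEEdgePath e l ∧ l ≠ [] ∧
  G.t (l.getLastD e) = G.o (l.headD e) ∧
  (∃ k : ℤ, G.q l = (k : ℚ)) ∧ G.q l ≠ 1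

/-- A mobile edge. -/
def Mobile (G : LGraph V E) (e : E) : Prop :=
  (∃ l, G.IsStrictMonotoneCycle l e ∨ G.IsStrictMonotoneCycle l (G.bar e)) ∨
  (∃ l, G.IsStrictIntegerCycle e l ∨ G.IsStrictIntegerCycle (G.bar e) l)

/-- The single slide of `e` over `f` is permitted. -/
def CanSlide (G : LGraph V E) (e f : E) : Prop :=
  f ≠ e ∧ f ≠ G.bar e ∧ G.o f = G.o e ∧ G.lab f ∣ G.lab e

open Classical in
/-- The result of the single slide of `e` over `f`. -/
noncomputable def slide (G : LGraph V E) (e f : E) : LGraph V E where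
  o := fun x => if x = e then G.t f else G.o x
  bar := G.bar
  bar_bar := G.bar_bar
  bar_ne := G.bar_ne
  lab := fun x => if x = e then G.lab e * G.lab (G.bar f) / G.lab f else G.lab x

/-- Successively slide `e` over the edges of a path. -/
noncomputable def slidePath : LGraph V E → E → List E → LGraph V E
  | G, _, [] => G
  | G, e, f :: l => slidePath (G.slide e f) e l

/-- Each single slide in the successive slide of `e` over a path is permitted. -/
def CanSlidePath : LGraph V E → E → List E → Prop
  | _, _, [] => True
  | G, e, f :: l => G.CanSlide e f ∧ CanSlidePath (G.slide e f) e l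

/-- Each single slide is permitted and each intermediate graph is reduced. -/
def GoodSlidePath : LGraph V E → E → List E → Prop
  | _, _, [] => True
  | G, e, f :: l => G.CanSlide e f ∧ (G.slide e f).Reduced ∧ GoodSlidePath (G.slide e f) e l

/-- Perform a finite sequence of single slides, given as pairs (slid edge, edge slid over). -/
noncomputable def slideSeq : LGraph V E → List (E × E) → LGraph V E
  | G, [] => G
  | G, p :: rest => slideSeq (G.slide p.1 p.2) rest

/-- A sequence of permitted single slides, each sliding a mobile edge. -/
def MobileSlideSeq : LGraph V E → List (E × E) → Prop
  | _, [] => True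
  | G, p :: rest => G.Mobile p.1 ∧ G.CanSlide p.1 p.2 ∧ MobileSlideSeq (G.slide p.1 p.2) rest

/-- Isomorphism of labeled graphs. -/
def Isom (G : LGraph V E) (G' : LGraph V' E') : Prop :=
  ∃ (φ : V → V') (Φ : E → E'),
    Function.Bijective φ ∧ Function.Bijective Φ ∧
    (∀ x, G'.o (Φ x) = φ (G.o x)) ∧
    (∀ x, G'.bar (Φ x) = Φ (G.bar x)) ∧
    (∀ x, G'.lab (Φ x) = G.lab x)

open Classical in
/-- The result of the induction move at the loop `e` with multiplier `m`. -/
noncomputable def inductionMove (G : LGraph V E) (e : E) (m : ℤ) : LGraph V E where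
  o := G.o
  bar := G.bar
  bar_bar := G.bar_bar
  bar_ne := G.bar_ne
  lab := fun x => if x ≠ e ∧ x ≠ G.bar e ∧ G.o x = G.o e then m * G.lab x else G.lab x

/-- `G'` is obtained from `G` by a single slide move (up to isomorphism). -/
def IsSlideMove (G : LGraph V E) (G' : LGraph V' E') : Prop :=
  ∃ e f, G.CanSlide e f ∧ Isom G' (G.slide e f)

/-- `G'` is obtained from `G` by a (forward) induction move. -/
def IsInductionMove (G : LGraph V E) (G' : LGraph V' E') : Prop :=
  ∃ (e : E) (m : ℤ), G.o e = G.t e ∧ G.lab e = 1 ∧ 1 ≤ m ∧ m ∣ G.lab (G.bar e) ∧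
    Isom G' (G.inductionMove e m)

/-- `G'` is obtained from `G` by an A-move. -/
def IsAMove (G : LGraph V E) (G' : LGraph V' E') : Prop :=
  ∃ (e d : E) (e' : E') (φ : V → V') (Φ : E → E'),
    G.o e = G.t e ∧ G.lab e = 1 ∧ G.lab (G.bar e) ≠ 1 ∧
    G.o d = G.o e ∧ G.t d ≠ G.o e ∧
    G.lab d ≠ 1 ∧ G.lab (G.bar d) ≠ 1 ∧ G.lab d ∣ G.lab (G.bar e) ∧
    (∀ x : E, G.o x = G.o e → x = e ∨ x = G.bar e ∨ x = d) ∧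
    G'.o e' = φ (G.t d) ∧ G'.t e' = φ (G.t d) ∧
    G'.lab e' = G.lab (G.bar d) ∧
    G'.lab (G'.bar e') = G.lab (G.bar d) * G.lab (G.bar e) ∧
    (∀ w₁ w₂ : V, w₁ ≠ G.o e → w₂ ≠ G.o e → φ w₁ = φ w₂ → w₁ = w₂) ∧
    (∀ v' : V', ∃ w : V, w ≠ G.o e ∧ φ w = v') ∧
    (∀ x : E, x ≠ e → x ≠ G.bar e → x ≠ d → x ≠ G.bar d →
      Φ x ≠ e' ∧ Φ x ≠ G'.bar e' ∧
      G'.o (Φ x) = φ (G.o x) ∧ G'.bar (Φ x) = Φ (G.bar x) ∧ G'.lab (Φ x) = G.lab x) ∧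
    (∀ x y : E, x ≠ e → x ≠ G.bar e → x ≠ d → x ≠ G.bar d →
      y ≠ e → y ≠ G.bar e → y ≠ d → y ≠ G.bar d → Φ x = Φ y → x = y) ∧
    (∀ y : E', y ≠ e' → y ≠ G'.bar e' →
      ∃ x : E, x ≠ e ∧ x ≠ G.bar e ∧ x ≠ d ∧ x ≠ G.bar d ∧ Φ x = y)

/-- A strict ascending loop: a loop with `λ(e) = 1 ≠ λ(ē)`. -/
def HasStrictAscendingLoop (G : LGraph V E) : Prop :=
  ∃ e : E, G.o e = G.t e ∧ G.lab e = 1 ∧ G.lab (G.bar e) ≠ 1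

end LGraph

/-- A labeled graph with its vertex and edge types bundled. -/
structure BGraph where
  V : Type
  E : Type
  G : LGraph V E

/-- An elementary deformation move: a slide, an induction move or its inverse,
or an A-move or its inverse. -/
def BGraph.ElemMove (X Y : BGraph) : Prop :=
  LGraph.IsSlideMove X.G Y.G ∨ LGraph.IsInductionMove X.G Y.G ∨
  LGraph.IsInductionMove Y.G X.G ∨ LGraph.IsAMove X.G Y.G ∨ LGraph.IsAMove Y.G X.G

/-- A finite sequence of elementary moves with all intermediate graphs reduced. -/
def BGraph.MoveSeq : BGraph → BGraph → Prop :=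
  Relation.ReflTransGen (fun X Y => X.ElemMove Y ∧ Y.G.Reduced)

/-- A reduced labeled graph is non-ascending if no reduced labeled graph obtained from it
by slide, induction and A-moves (all intermediate graphs reduced) contains a
strict ascending loop. -/
def LGraph.NonAscending {V E : Type} (G : LGraph V E) : Prop :=
  ∀ Y : BGraph, BGraph.MoveSeq ⟨V, E, G⟩ Y → ¬ Y.G.HasStrictAscendingLoop

/-!
Sliding `e` over a path changes only the origin and the label of `e`: the origin moves to the end
of the path and the label is multiplied by the modulus of the path. Hence sliding over a redundant
cycle gives back the graph one started from. Moreover, a path is an `e`-edge path exactly when the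
single slides over its edges are successively permitted, a condition that can be checked separately
on the part of the path before the cycle and, from the graph reached there, on the part after it.
-/

attribute [ext] LGraph

theorem exists_cast_eq_mul_iff_dvd {a b : ℤ} : (∃ k : ℤ, (a : ℚ) = k * b) ↔ b ∣ a := by
  simp only [dvd_iff_exists_eq_mul_left]
  norm_cast

namespace LGraph

variable {V E : Type} {G : LGraph V E} {e f g : E} {l m σ : List E}

/-- A redundant cycle: a nonempty closed path with trivial modulus. That consecutive edges match
is not included, since it is inherited from the ambient edge path. -/
def IsRedundantCycle (G : LGraph V E) (σ : List E) : Prop :=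
  ∃ h : σ ≠ [], G.o (σ.head h) = G.t (σ.getLast h) ∧ G.q σ = 1

/-- The divisibility condition in the definition of an `e`-edge path, with an arbitrary rational
`r` in place of `λ(e)`, so that it can be analysed edge by edge. -/
def IsIntegralAlong (G : LGraph V E) (r : ℚ) (l : List E) : Prop :=
  ∀ i : Fin l.length, ∃ k : ℤ, r * G.q (l.take i.1) = (k : ℚ) * (G.lab (l.get i) : ℚ)

theorem bar_ne_of_ne_bar (h : g ≠ G.bar e) : G.bar g ≠ e := by
  rintro rfl
  exact h (G.bar_bar g).symm

theorem q_nil (G : LGraph V E) : G.q [] = 1 := rfl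

theorem q_cons (G : LGraph V E) (f : E) (l : List E) : G.q (f :: l) = G.qe f * G.q l :=
  List.prod_cons

theorem qe_ne_zero (hlab : ∀ a, G.lab a ≠ 0) (f : E) : G.qe f ≠ 0 :=
  div_ne_zero (Int.cast_ne_zero.2 (hlab _)) (Int.cast_ne_zero.2 (hlab f))

theorem isEdgePath_cons :
    G.IsEdgePath (f :: l) ↔ (∀ a ∈ l.head?, G.o a = G.t f) ∧ G.IsEdgePath l :=
  List.isChain_cons.trans <| and_congr_left' <| forall₂_congr fun _ _ => eq_comm

theorem isIntegralAlong_cons {r : ℚ} :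
    G.IsIntegralAlong r (f :: l) ↔
      (∃ k : ℤ, r = k * G.lab f) ∧ G.IsIntegralAlong (r * G.qe f) l := by
  refine (Fin.forall_fin_succ (n := l.length)).trans ?_
  simp [IsIntegralAlong, q_nil, q_cons, mul_assoc]

theorem isEEdgePath_iff :
    G.IsEEdgePath e l ↔ G.IsEdgePath l ∧ (∀ a ∈ l, a ≠ e ∧ a ≠ G.bar e) ∧
      (∀ a ∈ l.head?, G.o a = G.o e) ∧ G.IsIntegralAlong (G.lab e) l :=
  Iff.rfl

theorem slide_o_self (G : LGraph V E) (e f : E) : (G.slide e f).o e = G.t f := if_pos rfl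

theorem slide_o_of_ne (h : g ≠ e) : (G.slide e f).o g = G.o g := if_neg h

theorem slide_lab_of_ne (h : g ≠ e) : (G.slide e f).lab g = G.lab g := if_neg h

theorem slide_t_of_ne_bar (h : g ≠ G.bar e) : (G.slide e f).t g = G.t g :=
  slide_o_of_ne (bar_ne_of_ne_bar h)

theorem slide_qe_of_ne (h : g ≠ e ∧ g ≠ G.bar e) : (G.slide e f).qe g = G.qe g :=
  congrArg₂ (fun x y : ℤ => (x : ℚ) / y) (slide_lab_of_ne (bar_ne_of_ne_bar h.2))
    (slide_lab_of_ne h.1)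

theorem slide_q_of_forall_ne (h : ∀ a ∈ l, a ≠ e ∧ a ≠ G.bar e) : (G.slide e f).q l = G.q l :=
  congrArg List.prod (List.map_congr_left fun a ha => slide_qe_of_ne (h a ha))

theorem slide_isEdgePath_iff (h : ∀ a ∈ l, a ≠ e ∧ a ≠ G.bar e) :
    (G.slide e f).IsEdgePath l ↔ G.IsEdgePath l :=
  List.IsChain.iff_of_mem_imp fun a b ha hb => by
    rw [slide_t_of_ne_bar (h a ha).2, slide_o_of_ne (h b hb).1]

theorem slide_isIntegralAlong_iff {r : ℚ} (h : ∀ a ∈ l, a ≠ e ∧ a ≠ G.bar e) :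
    (G.slide e f).IsIntegralAlong r l ↔ G.IsIntegralAlong r l := by
  refine forall_congr' fun i => ?_
  rw [slide_q_of_forall_ne fun a ha => h a (List.mem_of_mem_take ha),
    slide_lab_of_ne (h _ (List.get_mem l i)).1]

theorem CanSlide.slide_lab_self (h : G.CanSlide e f) (hf : G.lab f ≠ 0) :
    ((G.slide e f).lab e : ℚ) = G.lab e * G.qe f := by
  obtain ⟨-, -, -, hdvd⟩ := h
  calc ((G.slide e f).lab e : ℚ)
      = ((G.lab e * G.lab (G.bar f) / G.lab f : ℤ) : ℚ) := congrArg Int.cast (if_pos rfl)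
    _ = (G.lab e * G.lab (G.bar f) : ℤ) / G.lab f :=
        Int.cast_div (hdvd.mul_right _) (Int.cast_ne_zero.2 hf)
    _ = G.lab e * G.qe f := by rw [Int.cast_mul, mul_div_assoc, qe]

theorem CanSlide.slide_lab_ne_zero (h : G.CanSlide e f) (hlab : ∀ a, G.lab a ≠ 0) (a : E) :
    (G.slide e f).lab a ≠ 0 := by
  obtain rfl | ha := eq_or_ne a e
  · rw [← Int.cast_ne_zero (α := ℚ), h.slide_lab_self (hlab f)]
    exact mul_ne_zero (Int.cast_ne_zero.2 (hlab a)) (qe_ne_zero hlab f)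
  · rw [slide_lab_of_ne ha]
    exact hlab a

theorem CanSlide.slide_isEEdgePath_iff (h : G.CanSlide e f) (hf : G.lab f ≠ 0)
    (hl : ∀ a ∈ l, a ≠ e ∧ a ≠ G.bar e) :
    (G.slide e f).IsEEdgePath e l ↔ G.IsEdgePath l ∧ (∀ a ∈ l.head?, G.o a = G.t f) ∧
      G.IsIntegralAlong (G.lab e * G.qe f) l := by
  have hhead : (∀ a ∈ l.head?, (G.slide e f).o a = G.t f) ↔ ∀ a ∈ l.head?, G.o a = G.t f :=
    forall₂_congr fun a ha => by rw [slide_o_of_ne (hl a (List.mem_of_mem_head? ha)).1]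
  rw [isEEdgePath_iff, slide_isEdgePath_iff hl, slide_o_self, hhead, h.slide_lab_self hf,
    slide_isIntegralAlong_iff hl]
  exact and_congr_right fun _ => and_iff_right hl

theorem isEEdgePath_cons (hf : G.lab f ≠ 0) :
    G.IsEEdgePath e (f :: l) ↔ G.CanSlide e f ∧ (G.slide e f).IsEEdgePath e l := by
  rw [isEEdgePath_iff, isEdgePath_cons, isIntegralAlong_cons, exists_cast_eq_mul_iff_dvd,
    List.forall_mem_cons]
  constructor
  · rintro ⟨⟨hhead, hpath⟩, ⟨hfe, hl⟩, hof, hdvd, hint⟩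
    have hslide : G.CanSlide e f := ⟨hfe.1, hfe.2, hof f rfl, hdvd⟩
    exact ⟨hslide, (hslide.slide_isEEdgePath_iff hf hl).2 ⟨hpath, hhead, hint⟩⟩
  · rintro ⟨hslide, hA⟩
    have hl : ∀ a ∈ l, a ≠ e ∧ a ≠ G.bar e := hA.2.1
    obtain ⟨hpath, hhead, hint⟩ := (hslide.slide_isEEdgePath_iff hf hl).1 hA
    obtain ⟨hfe, hfbar, hof, hdvd⟩ := hslide
    exact ⟨⟨hhead, hpath⟩, ⟨⟨hfe, hfbar⟩, hl⟩, by simpa using hof, hdvd, hint⟩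

theorem isEEdgePath_iff_canSlidePath (hlab : ∀ a, G.lab a ≠ 0) :
    G.IsEEdgePath e l ↔ G.CanSlidePath e l := by
  induction l generalizing G with
  | nil => exact iff_of_true ⟨List.isChain_nil, by simp⟩ trivial
  | cons f l ih =>
    rw [isEEdgePath_cons (hlab f)]
    exact and_congr_right fun h => ih (h.slide_lab_ne_zero hlab)

theorem slidePath_append (G : LGraph V E) (e : E) (l m : List E) :
    G.slidePath e (l ++ m) = (G.slidePath e l).slidePath e m := by
  induction l generalizing G with
  | nil => rfl
  | cons f _ ih => exact ih _

theorem canSlidePath_append :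
    G.CanSlidePath e (l ++ m) ↔ G.CanSlidePath e l ∧ (G.slidePath e l).CanSlidePath e m := by
  induction l generalizing G with
  | nil => exact (iff_of_eq (true_and _)).symm
  | cons f l ih => exact (and_congr_right fun _ => ih).trans and_assoc.symm

theorem CanSlidePath.forall_ne (h : G.CanSlidePath e l) : ∀ a ∈ l, a ≠ e ∧ a ≠ G.bar e := by
  induction l generalizing G with
  | nil => exact List.forall_mem_nil _
  | cons f l ih => exact List.forall_mem_cons.2 ⟨⟨h.1.1, h.1.2.1⟩, ih (G := G.slide e f) h.2⟩

theorem slidePath_bar (G : LGraph V E) (e : E) (l : List E) : (G.slidePath e l).bar = G.bar := by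
  induction l generalizing G with
  | nil => rfl
  | cons f _ ih => exact ih _

theorem slidePath_o_of_ne (h : g ≠ e) : (G.slidePath e l).o g = G.o g := by
  induction l generalizing G with
  | nil => rfl
  | cons f l ih => exact ih.trans (slide_o_of_ne h)

theorem slidePath_lab_of_ne (h : g ≠ e) : (G.slidePath e l).lab g = G.lab g := by
  induction l generalizing G with
  | nil => rfl
  | cons f l ih => exact ih.trans (slide_lab_of_ne h)

theorem slidePath_t_of_ne_bar (h : g ≠ G.bar e) : (G.slidePath e l).t g = G.t g := by
  rw [t, slidePath_bar, slidePath_o_of_ne (bar_ne_of_ne_bar h), t]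

theorem slidePath_q_of_forall_ne (h : ∀ a ∈ m, a ≠ e ∧ a ≠ G.bar e) :
    (G.slidePath e l).q m = G.q m := by
  induction l generalizing G with
  | nil => rfl
  | cons f l ih => exact (ih (G := G.slide e f) h).trans (slide_q_of_forall_ne h)

theorem slidePath_o_self (hl : l ≠ []) (hlast : l.getLast hl ≠ G.bar e) :
    (G.slidePath e l).o e = G.t (l.getLast hl) := by
  conv_lhs => rw [← List.dropLast_append_getLast hl, slidePath_append]
  exact (slide_o_self _ _ _).trans (slidePath_t_of_ne_bar hlast)

theorem CanSlidePath.slidePath_lab_self (h : G.CanSlidePath e l) (hlab : ∀ a, G.lab a ≠ 0) :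
    ((G.slidePath e l).lab e : ℚ) = G.lab e * G.q l := by
  induction l generalizing G with
  | nil => exact (mul_one _).symm
  | cons f l ih =>
    obtain ⟨hf, hl⟩ := h
    have hl_ne : ∀ a ∈ l, a ≠ e ∧ a ≠ G.bar e := hl.forall_ne
    calc (((G.slide e f).slidePath e l).lab e : ℚ)
        = (G.slide e f).lab e * (G.slide e f).q l := ih hl (hf.slide_lab_ne_zero hlab)
      _ = G.lab e * G.qe f * G.q l := by
          rw [hf.slide_lab_self (hlab f), slide_q_of_forall_ne hl_ne]
      _ = G.lab e * G.q (f :: l) := by rw [mul_assoc, q_cons]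

theorem CanSlidePath.slidePath_lab_ne_zero (h : G.CanSlidePath e l) (hlab : ∀ a, G.lab a ≠ 0) :
    ∀ a, (G.slidePath e l).lab a ≠ 0 := by
  induction l generalizing G with
  | nil => exact hlab
  | cons f l ih => exact ih h.2 (h.1.slide_lab_ne_zero hlab)

theorem isRedundantCycle_iff :
    G.IsRedundantCycle σ ↔ σ ≠ [] ∧ G.o (σ.headD e) = G.t (σ.getLastD e) ∧ G.q σ = 1 := by
  cases σ with
  | nil => simp [IsRedundantCycle]
  | cons f l =>
    simp only [IsRedundantCycle, List.head_cons, List.headD_cons, List.getLast_eq_getLastD,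
      List.getLastD_cons, exists_prop]

theorem IsRedundantCycle.slidePath (hσ : G.IsRedundantCycle σ)
    (h : ∀ a ∈ σ, a ≠ e ∧ a ≠ G.bar e) : (G.slidePath e l).IsRedundantCycle σ := by
  obtain ⟨hne, hcyc, hq⟩ := hσ
  refine ⟨hne, ?_, (slidePath_q_of_forall_ne h).trans hq⟩
  rw [slidePath_o_of_ne (h _ (List.head_mem hne)).1,
    slidePath_t_of_ne_bar (h _ (List.getLast_mem hne)).2, hcyc]

theorem IsRedundantCycle.slidePath_eq_self (hσ : G.IsRedundantCycle σ)
    (h : G.CanSlidePath e σ) (hlab : ∀ a, G.lab a ≠ 0) : G.slidePath e σ = G := by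
  obtain ⟨hne, hcyc, hq⟩ := hσ
  have hhead : G.o (σ.head hne) = G.o e := by
    cases σ with
    | nil => exact absurd rfl hne
    | cons f l => exact h.1.2.2.1
  have ho : (G.slidePath e σ).o e = G.o e := by
    rw [slidePath_o_self hne (h.forall_ne _ (List.getLast_mem hne)).2, ← hcyc, hhead]
  have hlab_self : (G.slidePath e σ).lab e = G.lab e := by
    rw [← Int.cast_inj (α := ℚ), h.slidePath_lab_self hlab, hq, mul_one]
  ext x
  · obtain rfl | hx := eq_or_ne x e
    exacts [ho, slidePath_o_of_ne hx]
  · rw [slidePath_bar]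
  · obtain rfl | hx := eq_or_ne x e
    exacts [hlab_self, slidePath_lab_of_ne hx]

end LGraph

theorem stmt7_general {V E : Type} (G : LGraph V E) (hlab : ∀ f, G.lab f ≠ 0)
    (e : E) (A₁ σ A₂ : List E) (hA : G.IsEEdgePath e (A₁ ++ σ ++ A₂))
    (hσ : G.IsRedundantCycle σ) :
    G.IsEEdgePath e (A₁ ++ A₂) ∧
      G.slidePath e (A₁ ++ σ ++ A₂) = G.slidePath e (A₁ ++ A₂) := by
  rw [LGraph.isEEdgePath_iff_canSlidePath hlab] at hA ⊢
  have hσ_ne : ∀ a ∈ σ, a ≠ e ∧ a ≠ G.bar e := fun a ha => hA.forall_ne a (by simp [ha])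
  obtain ⟨hA₁σ, hA₂⟩ := LGraph.canSlidePath_append.1 hA
  obtain ⟨hA₁, hσ_slide⟩ := LGraph.canSlidePath_append.1 hA₁σ
  have hid : G.slidePath e (A₁ ++ σ) = G.slidePath e A₁ := by
    rw [LGraph.slidePath_append]
    exact (hσ.slidePath hσ_ne).slidePath_eq_self hσ_slide (hA₁.slidePath_lab_ne_zero hlab)
  rw [hid] at hA₂
  refine ⟨LGraph.canSlidePath_append.2 ⟨hA₁, hA₂⟩, ?_⟩
  rw [LGraph.slidePath_append, hid, LGraph.slidePath_append]

/-- Removing a redundant subcycle `σ` (a nonempty subcycle with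
`o(eᵢ) = t(eⱼ)` and `q(σ) = 1`) from an `e`-edge path `A = A₁ ++ σ ++ A₂` again yields an
`e`-edge path, and sliding `e` over `A` produces the same labeled graph as sliding `e`
over `A₁ ++ A₂`. -/
theorem stmt7 {V E : Type} [Finite V] [Finite E] (G : LGraph V E)
    (hpos : G.Positive)
    (e : E) (A₁ σ A₂ : List E)
    (hA : G.IsEEdgePath e (A₁ ++ σ ++ A₂))
    (hσne : σ ≠ [])
    (hcyc : G.o (σ.headD e) = G.t (σ.getLastD e))
    (hq : G.q σ = 1) :
    G.IsEEdgePath e (A₁ ++ A₂) ∧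
      G.slidePath e (A₁ ++ σ ++ A₂) = G.slidePath e (A₁ ++ A₂) := by
  exact stmt7_general G (fun f => (hpos f).ne') e A₁ σ A₂ hA
    (LGraph.isRedundantCycle_iff.2 ⟨hσne, hcyc, hq⟩)
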